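/- Let G = (V,E) be a directed graph with n vertices, disjoint vertex sets X = {x_1,...,x_k} and Y = {y_1,...,y_k}, and a distinct variable x_e for each edge e. For a walk W let M_W be the monomial in which x_e appears with multiplicity equal to the number of occurrences of e in W. Let F denote the family of all proper sets of k walks of total length at most l, and Q = \sum_{S ∈ F} \prod_{W ∈ S} M_W, viewed as a polynomial over a field of characteristic 2. Then Q is not the zero polynomial if and only if there exists a proper set of k pairwise vertex-disjoint walks of total length at most l in G. -/

import Mathlib

set_option autoImplicit false

open scoped Classical

noncomputable section

variable {V : Type*}

/-- The list of edge occurrences of a walk given by its list of vertices. -/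
def edgesOf (w : List V) : List (V × V) := w.zip w.tail

/-- `w` is a walk in the directed graph `E` from the source set `X` to the sink
set `Y`: it has at least two vertices, consecutive vertices are joined by edges,
its first vertex is in `X`, its last vertex is in `Y`, and all intermediate
vertices lie outside `X ∪ Y`. -/
def IsWalk (E : V → V → Prop) (X Y : Set V) (w : List V) : Prop :=
  2 ≤ w.length ∧ w.Chain' E ∧
    (∀ a, w.head? = some a → a ∈ X) ∧
    (∀ b, w.getLast? = some b → b ∈ Y) ∧
    ∀ v ∈ w.tail.dropLast, v ∉ X ∧ v ∉ Y

/-- A proper (indexed) set of `k` walks: each member is a walk from `X` to `Y`,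
and the walks have pairwise distinct start vertices and pairwise distinct end
vertices. -/
def Proper (E : V → V → Prop) (X Y : Set V) {k : ℕ} (S : Fin k → List V) : Prop :=
  (∀ i, IsWalk E X Y (S i)) ∧
    Function.Injective (fun i => (S i).head?) ∧
    Function.Injective (fun i => (S i).getLast?)

/-- The walks `S i` are pairwise vertex-disjoint. -/
def Disjointly {k : ℕ} (S : Fin k → List V) : Prop :=
  ∀ i j, i ≠ j → ∀ v, v ∈ S i → v ∉ S j

/-- The total length of an indexed set of walks (each walk on `m` vertices has
length `m - 1`). -/
def totalLen {k : ℕ} (S : Fin k → List V) : ℕ := ∑ i, ((S i).length - 1)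


/-- A proper (unordered) set of `k` walks: a finite set of `k` walks from `X`
to `Y` with pairwise distinct start vertices and pairwise distinct end
vertices. -/
def ProperSet (E : V → V → Prop) (X Y : Set V) (k : ℕ) (S : Finset (List V)) : Prop :=
  S.card = k ∧ (∀ w ∈ S, IsWalk E X Y w) ∧
    (∀ w ∈ S, ∀ w' ∈ S, w ≠ w' → w.head? ≠ w'.head? ∧ w.getLast? ≠ w'.getLast?)

/-- The monomial `M_W` of a walk `W`: each edge variable occurs with
multiplicity equal to the number of occurrences of the edge on the walk. -/
def walkMonomial (F : Type*) [Field F] (w : List V) : MvPolynomial (V × V) F :=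
  (edgesOf w).map (fun e => MvPolynomial.X e) |>.prod


theorem edgesOf_split (a b : List V) (v : V) :
    edgesOf (a ++ v :: b) = edgesOf (a ++ [v]) ++ edgesOf (v :: b) := by
  induction a with
  | nil => simp [edgesOf]
  | cons x a ih =>
    cases a with
    | nil => simp [edgesOf]
    | cons y a => simpa [edgesOf] using ih

theorem mem_edgesOf {w : List V} {x y : V} (h : (x, y) ∈ edgesOf w) :
    ∃ a b, w = a ++ x :: y :: b := by
  induction w with
  | nil => simp [edgesOf] at h
  | cons z w ih =>
    cases w with
    | nil => simp [edgesOf] at h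
    | cons z' w =>
      have h' : (x = z ∧ y = z') ∨ (x, y) ∈ edgesOf (z' :: w) := by
        simpa [edgesOf] using h
      rcases h' with ⟨rfl, rfl⟩ | h'
      · exact ⟨[], w, rfl⟩
      · obtain ⟨a, b, e⟩ := ih h'
        exact ⟨z :: a, b, by simp [e]⟩

theorem edgesOf_mem (a b : List V) (x y : V) : (x, y) ∈ edgesOf (a ++ x :: y :: b) := by
  rw [edgesOf_split]; simp [edgesOf]

/-- Suffix after the last occurrence. -/
def afterL (v : V) : List V → List V
  | [] => []
  | x :: w => if v ∈ w then afterL v w else if x = v then w else x :: w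

theorem not_mem_afterL (v : V) (w : List V) : v ∉ afterL v w := by
  induction w with
  | nil => simp [afterL]
  | cons x w ih =>
    unfold afterL
    split_ifs with h1 h2
    · exact ih
    · exact h1
    · simp [h1, Ne.symm h2]

theorem afterL_of_not_mem {v : V} {w : List V} (h : v ∉ w) : afterL v w = w := by
  cases w with
  | nil => rfl
  | cons x w =>
    simp only [List.mem_cons, not_or] at h
    simp [afterL, h.2, Ne.symm h.1]

theorem afterL_spec {v : V} {w : List V} (h : v ∈ w) : ∃ a, w = a ++ v :: afterL v w := by
  induction w with
  | nil => simp at h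
  | cons x w ih =>
    by_cases h1 : v ∈ w
    · obtain ⟨a, e⟩ := ih h1
      refine ⟨x :: a, ?_⟩
      simp only [afterL, h1, if_true, List.cons_append]
      rw [← e]
    · have : x = v := by
        rcases List.mem_cons.1 h with h | h
        · exact h.symm
        · exact absurd h h1
      exact ⟨[], by simp [afterL, h1, this]⟩

theorem afterL_append {v : V} (a : List V) {b : List V} (h : v ∉ b) :
    afterL v (a ++ v :: b) = b := by
  induction a with
  | nil => simp [afterL, h]
  | cons x a ih => simp [afterL] at ih ⊢; exact ih

theorem afterL_suffix (v : V) (w : List V) : ∃ a, w = a ++ afterL v w := by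
  by_cases h : v ∈ w
  · obtain ⟨a, e⟩ := afterL_spec h
    exact ⟨a ++ [v], by simpa using e⟩
  · exact ⟨[], by simp [afterL_of_not_mem h]⟩

theorem afterL_length (v : V) (w : List V) : (afterL v w).length ≤ w.length := by
  obtain ⟨a, e⟩ := afterL_suffix v w
  have := congrArg List.length e
  simp at this
  omega

theorem afterL_append' {x : V} (w : List V) {d : List V} (h : x ∉ d) :
    afterL x (w ++ d) = afterL x w ++ d := by
  by_cases hx : x ∈ w
  · obtain ⟨a, e⟩ := afterL_spec hx
    conv_lhs => rw [e]
    rw [List.append_assoc, List.cons_append, afterL_append]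
    simp [h, not_mem_afterL]
  · rw [afterL_of_not_mem hx, afterL_of_not_mem (by simp [hx, h])]

/-- Chronological loop erasure. -/
def LE' : List V → List V
  | [] => []
  | x :: w => x :: LE' (afterL x w)
termination_by w => w.length
decreasing_by
  have := afterL_length x w
  simp; omega

theorem LE_nil : LE' ([] : List V) = [] := by simp [LE']
theorem LE_cons (x : V) (w : List V) : LE' (x :: w) = x :: LE' (afterL x w) := by
  rw [LE']

theorem LE_sublist : ∀ (n : ℕ) (w : List V), w.length ≤ n → (LE' w).Sublist w := by
  intro n
  induction n with
  | zero => intro w h; simp at h; subst h; simp [LE_nil]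
  | succ n ih =>
    intro w h
    cases w with
    | nil => simp [LE_nil]
    | cons x w =>
      rw [LE_cons]
      have := afterL_length x w
      simp at h
      obtain ⟨a, e⟩ := afterL_suffix x w
      refine List.Sublist.cons_cons x ((ih _ (by omega)).trans ?_)
      conv_rhs => rw [e]
      exact List.sublist_append_right _ _

theorem LE_sub (w : List V) : (LE' w).Sublist w := LE_sublist _ w le_rfl

theorem LE_head (w : List V) : (LE' w).head? = w.head? := by
  cases w <;> simp [LE_nil, LE_cons]

theorem LE_props (E : V → V → Prop) : ∀ (n : ℕ) (w : List V), w.length ≤ n →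
    (LE' w).Nodup ∧ (LE' w).getLast? = w.getLast? ∧ (w.IsChain E → (LE' w).IsChain E) := by
  intro n
  induction n with
  | zero => intro w h; simp at h; subst h; simp [LE_nil]
  | succ n ih =>
    intro w h
    cases w with
    | nil => simp [LE_nil]
    | cons x w =>
      rw [LE_cons]
      have := afterL_length x w
      simp at h
      obtain ⟨h1, h2, h3⟩ := ih (afterL x w) (by omega)
      have key : ∃ a, x :: w = a ++ x :: afterL x w := by
        by_cases hx : x ∈ w
        · obtain ⟨a, e⟩ := afterL_spec hx
          exact ⟨x :: a, by rw [List.cons_append, ← e]⟩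
        · exact ⟨[], by simp [afterL_of_not_mem hx]⟩
      obtain ⟨a, e⟩ := key
      refine ⟨?_, ?_, ?_⟩
      · rw [List.nodup_cons]
        exact ⟨fun hm => not_mem_afterL x w ((LE_sub _).subset hm), h1⟩
      · rw [e]
        simp [List.getLast?_cons, h2]
      · intro hc
        rw [e] at hc
        have hc := (List.isChain_append.1 hc).2.1
        rw [List.isChain_cons] at hc ⊢
        rw [LE_head]
        exact ⟨hc.1, h3 hc.2⟩

theorem LE_cut : ∀ (n : ℕ) (w : List V), w.length ≤ n → ∀ (p : List V) (v : V) (q : List V),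
    LE' w = p ++ v :: q → ∃ a b, w = a ++ v :: b ∧ v ∉ b ∧ (∀ u ∈ p, u ∉ b) ∧
      ∀ d, v ∉ d → (∀ u ∈ p, u ∉ d) → LE' (a ++ v :: d) = p ++ v :: LE' d := by
  intro n
  induction n with
  | zero => intro w h p v q hw; simp at h; subst h; simp [LE_nil] at hw
  | succ n ih =>
    intro w h p v q hw
    cases w with
    | nil => simp [LE_nil] at hw
    | cons x w =>
      rw [LE_cons] at hw
      have hlen := afterL_length x w
      simp at h
      cases p with
      | nil =>
        simp at hw
        obtain ⟨rfl, -⟩ := hw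
        by_cases hx : x ∈ w
        · obtain ⟨a, e⟩ := afterL_spec hx
          refine ⟨x :: a, afterL x w, by rw [List.cons_append, ← e], not_mem_afterL _ _, by simp, ?_⟩
          intro d hd _
          rw [List.cons_append, LE_cons, afterL_append _ hd]; rfl
        · refine ⟨[], w, rfl, hx, by simp, ?_⟩
          intro d hd _
          simp [LE_cons, afterL_of_not_mem hd]
      | cons y p =>
        simp at hw
        obtain ⟨rfl, hw⟩ := hw
        obtain ⟨a, b, e, hb, hpb, hd⟩ := ih _ (by omega) p v q hw
        have hxx := not_mem_afterL x w
        rw [e] at hxx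
        simp at hxx
        obtain ⟨c, hc⟩ := afterL_suffix x w
        refine ⟨x :: c ++ a, b, ?_, hb, ?_, ?_⟩
        · rw [e] at hc; simp [hc]
        · intro u hu
          rcases List.mem_cons.1 hu with rfl | hu
          · exact hxx.2.2
          · exact hpb u hu
        · intro d hvd hpd
          have hxd : x ∉ d := hpd x (by simp)
          have hca : afterL x (c ++ (a ++ v :: d)) = a ++ v :: d := by
            have hx1 : x ∉ a ++ v :: b := by simp [hxx]
            have hx2 : x ∉ a ++ v :: d := by simp [hxx, hxd]
            have h0 : afterL x c = [] := by
              have h3 : afterL x w = a ++ v :: b := e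
              rw [hc, e, afterL_append' _ hx1] at h3
              simpa using h3
            rw [afterL_append' _ hx2, h0]; rfl
          have := hd d hvd (fun u hu => hpd u (by simp [hu]))
          simp only [List.cons_append, List.append_assoc, LE_cons, hca, this]

theorem first_split (P : V → Prop) (l : List V) (h : ∃ u ∈ l, P u) :
    ∃ p v q, l = p ++ v :: q ∧ P v ∧ ∀ u ∈ p, ¬ P u := by
  induction l with
  | nil => simp at h
  | cons x l ih =>
    by_cases hx : P x
    · exact ⟨[], x, l, rfl, hx, by simp⟩
    · obtain ⟨u, hu, hP⟩ := h
      rcases List.mem_cons.1 hu with rfl | hu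
      · exact absurd hP hx
      · obtain ⟨p, v, q, e, hv, hp⟩ := ih ⟨u, hu, hP⟩
        refine ⟨x :: p, v, q, by simp [e], hv, ?_⟩
        intro u hu
        rcases List.mem_cons.1 hu with rfl | hu
        · exact hx
        · exact hp u hu

theorem split_cases {p p' q q' : List V} {v v' : V} (h : p ++ v :: q = p' ++ v' :: q') :
    v = v' ∨ v ∈ p' ∨ v' ∈ p := by
  rcases List.append_eq_append_iff.1 h with ⟨a, h1, h2⟩ | ⟨a, h1, h2⟩
  · cases a with
    | nil => simp at h2; exact Or.inl h2.1
    | cons z a => simp at h2; right; left; rw [h1, h2.1]; simp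
  · cases a with
    | nil => simp at h2; exact Or.inl h2.1.symm
    | cons z a => simp at h2; right; right; rw [h1, h2.1]; simp

theorem last_split_unique {a a' b b' : List V} {v : V} (h : a ++ v :: b = a' ++ v :: b')
    (hb : v ∉ b) (hb' : v ∉ b') : a = a' ∧ b = b' := by
  have h1 : b = b' := by
    rw [← afterL_append a hb, h, afterL_append a' hb']
  subst h1
  exact ⟨List.append_cancel_right h, rfl⟩

theorem isWalk_iff {E : V → V → Prop} {X Y : Set V} {w : List V} :
    IsWalk E X Y w ↔ ∃ x m y, w = x :: (m ++ [y]) ∧ x ∈ X ∧ y ∈ Y ∧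
      (∀ u ∈ m, u ∉ X ∧ u ∉ Y) ∧ w.IsChain E := by
  constructor
  · rintro ⟨h1, h2, h3, h4, h5⟩
    cases w with
    | nil => simp at h1
    | cons x w =>
      rcases List.eq_nil_or_concat w with rfl | ⟨m, y, rfl⟩
      · simp at h1
      · exact ⟨x, m, y, by simp, h3 x (by simp), h4 y (by simp [List.getLast?_cons]),
          by simpa using h5, h2⟩
  · rintro ⟨x, m, y, rfl, hx, hy, hm, hc⟩
    refine ⟨by simp, hc, ?_, ?_, ?_⟩
    · simpa using hx
    · simpa [List.getLast?_cons] using hy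
    · simpa using hm

theorem walk_mem_X {E : V → V → Prop} {X Y : Set V} (hXY : Disjoint X Y) {w : List V}
    (h : IsWalk E X Y w) {v : V} (hv : v ∈ w) (hX : v ∈ X) : w.head? = some v := by
  obtain ⟨x, m, y, rfl, hx, hy, hm, hc⟩ := isWalk_iff.1 h
  simp at hv
  rcases hv with rfl | hv | rfl
  · simp
  · exact absurd hX (hm v hv).1
  · exact absurd hy (Set.disjoint_left.1 hXY hX)

theorem walk_mem_Y {E : V → V → Prop} {X Y : Set V} (hXY : Disjoint X Y) {w : List V}
    (h : IsWalk E X Y w) {v : V} (hv : v ∈ w) (hY : v ∈ Y) : w.getLast? = some v := by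
  obtain ⟨x, m, y, rfl, hx, hy, hm, hc⟩ := isWalk_iff.1 h
  simp at hv
  rcases hv with rfl | hv | rfl
  · exact absurd hY (Set.disjoint_left.1 hXY hx)
  · exact absurd hY (hm v hv).2
  · simp [List.getLast?_cons]

/-- Splitting a walk at an intermediate vertex. -/
theorem walk_split {E : V → V → Prop} {X Y : Set V} {a b : List V} {v : V}
    (hvX : v ∉ X) (hvY : v ∉ Y) :
    IsWalk E X Y (a ++ v :: b) ↔
      (∃ x a', a = x :: a' ∧ x ∈ X ∧ (∀ u ∈ a', u ∉ X ∧ u ∉ Y) ∧ (a ++ [v]).IsChain E) ∧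
      (∃ y b', b = b' ++ [y] ∧ y ∈ Y ∧ (∀ u ∈ b', u ∉ X ∧ u ∉ Y) ∧ (v :: b).IsChain E) := by
  rw [isWalk_iff]
  have hch : (a ++ v :: b).IsChain E ↔ (a ++ [v]).IsChain E ∧ (v :: b).IsChain E := by
    exact List.isChain_split
  rw [hch]
  constructor
  · rintro ⟨x, m, y, e, hx, hy, hm, hc1, hc2⟩
    cases a with
    | nil => simp at e; exact absurd hx (e.1 ▸ hvX)
    | cons z a =>
      simp at e
      obtain ⟨rfl, e⟩ := e
      rcases List.eq_nil_or_concat b with rfl | ⟨b, z', rfl⟩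
      · have := List.append_inj_right' e rfl
        simp at this
        exact absurd hy (this ▸ hvY)
      · have e' : (a ++ v :: b) ++ [z'] = m ++ [y] := by simpa using e
        have h1 := List.append_inj_right' e' rfl
        have h2 := List.append_inj_left' e' rfl
        simp at h1
        subst h1 h2
        refine ⟨⟨z, a, rfl, hx, fun u hu => hm u (by simp [hu]), hc1⟩,
          ⟨z', b, by simp, hy, fun u hu => hm u (by simp [hu]), hc2⟩⟩
  · rintro ⟨⟨x, a', rfl, hx, ha, hc1⟩, ⟨y, b', rfl, hy, hb, hc2⟩⟩
    refine ⟨x, a' ++ v :: b', y, by simp, hx, hy, ?_, hc1, hc2⟩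
    intro u hu
    simp at hu
    rcases hu with hu | rfl | hu
    · exact ha u hu
    · exact ⟨hvX, hvY⟩
    · exact hb u hu

theorem LE_walk {E : V → V → Prop} {X Y : Set V} (hXY : Disjoint X Y) {w : List V}
    (h : IsWalk E X Y w) : IsWalk E X Y (LE' w) := by
  obtain ⟨x, m, y, e, hx, hy, hm, hc⟩ := isWalk_iff.1 h
  obtain ⟨h1, h2, h3⟩ := LE_props E _ w le_rfl
  have hh := LE_head w
  have hs := (LE_sub w).subset
  have hcc := h3 hc
  have hxy : x ≠ y := fun h => Set.disjoint_left.1 hXY hx (h ▸ hy)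
  rw [isWalk_iff]
  have hl : w.getLast? = some y := by rw [e]; simp [List.getLast?_cons]
  have hhd : w.head? = some x := by rw [e]; rfl
  rw [hl] at h2
  rw [hhd] at hh
  generalize LE' w = l at *
  cases l with
  | nil => simp at hh
  | cons x' l =>
    simp at hh
    subst hh
    rcases List.eq_nil_or_concat l with rfl | ⟨m', y', rfl⟩
    · simp at h2; exact absurd h2 hxy
    · simp [List.getLast?_cons] at h2
      subst h2
      refine ⟨x', m', y', by simp, hx, hy, ?_, hcc⟩
      intro u hu
      have : u ∈ w := hs (by simp [hu])
      rw [e] at this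
      simp at this
      simp [List.nodup_append] at h1
      rcases this with rfl | h | rfl
      · exact absurd hu h1.1.1
      · exact hm u h
      · exact absurd rfl (h1.2.2 u hu)

/-- Canonical swapping data for a set of walks (`κ` orders the walks by start vertex). -/
structure Spec (κ : Option V → ℕ) (S : Finset (List V)) (v : V) (a b c d : List V) : Prop where
  m1 : a ++ v :: b ∈ S
  m2 : c ++ v :: d ∈ S
  lt : κ (a ++ v :: b).head? < κ (c ++ v :: d).head?
  nb : v ∉ b
  nd : v ∉ d
  h1 : ∀ w ∈ S, κ w.head? < κ (a ++ v :: b).head? → ∀ w' ∈ S, κ w.head? < κ w'.head? →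
    ∀ u ∈ LE' w, u ∉ w'
  h2 : ∃ p q, LE' (a ++ v :: b) = p ++ v :: q ∧ ∀ u ∈ p, ∀ w' ∈ S,
    κ (a ++ v :: b).head? < κ w'.head? → u ∉ w'
  h4 : ∀ w' ∈ S, κ (a ++ v :: b).head? < κ w'.head? → κ w'.head? < κ (c ++ v :: d).head? → v ∉ w'

theorem Spec.unique {κ : Option V → ℕ} {S : Finset (List V)}
    (hS : ∀ w ∈ S, ∀ w' ∈ S, κ w.head? = κ w'.head? → w = w')
    {v v' : V} {a b c d a' b' c' d' : List V} (s : Spec κ S v a b c d)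
    (s' : Spec κ S v' a' b' c' d') : v = v' ∧ a = a' ∧ b = b' ∧ c = c' ∧ d = d' := by
  have hv : v ∈ LE' (a ++ v :: b) := by obtain ⟨p, q, e, -⟩ := s.h2; rw [e]; simp
  have hv' : v' ∈ LE' (a' ++ v' :: b') := by obtain ⟨p, q, e, -⟩ := s'.h2; rw [e]; simp
  have e1 : a ++ v :: b = a' ++ v' :: b' := by
    rcases lt_trichotomy (κ (a ++ v :: b).head?) (κ (a' ++ v' :: b').head?) with h | h | h
    · exact absurd (by simp) (s'.h1 _ s.m1 h _ s.m2 s.lt v hv)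
    · exact hS _ s.m1 _ s'.m1 h
    · exact absurd (by simp) (s.h1 _ s'.m1 h _ s'.m2 s'.lt v' hv')
  have e2 : v = v' := by
    obtain ⟨p, q, e, hp⟩ := s.h2
    obtain ⟨p', q', e', hp'⟩ := s'.h2
    have : p ++ v :: q = p' ++ v' :: q' := by rw [← e, ← e', e1]
    rcases split_cases this with h | h | h
    · exact h
    · exact absurd (by simp) (hp' v h _ s.m2 (e1 ▸ s.lt))
    · exact absurd (by simp) (hp v' h _ s'.m2 (e1 ▸ s'.lt))
  subst e2
  have e3 : c ++ v :: d = c' ++ v :: d' := by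
    rcases lt_trichotomy (κ (c ++ v :: d).head?) (κ (c' ++ v :: d').head?) with h | h | h
    · exact absurd (by simp) (s'.h4 _ s.m2 (e1 ▸ s.lt) h)
    · exact hS _ s.m2 _ s'.m2 h
    · exact absurd (by simp) (s.h4 _ s'.m2 (e1 ▸ s'.lt) h)
  obtain ⟨r1, r2⟩ := last_split_unique e1 s.nb s'.nb
  obtain ⟨r3, r4⟩ := last_split_unique e3 s.nd s'.nd
  exact ⟨rfl, r1, r2, r3, r4⟩

theorem Spec.exists {κ : Option V → ℕ} {S : Finset (List V)}
    (hbad : ∃ w ∈ S, ∃ w' ∈ S, κ w.head? < κ w'.head? ∧ ∃ u ∈ LE' w, u ∈ w') :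
    ∃ v a b c d, Spec κ S v a b c d := by
  obtain ⟨w0, hw0, hb0⟩ := hbad
  obtain ⟨w1, hw1, hmin⟩ := Finset.exists_min_image
    (S.filter (fun w => ∃ w' ∈ S, κ w.head? < κ w'.head? ∧ ∃ u ∈ LE' w, u ∈ w'))
    (fun w => κ w.head?) ⟨w0, by simpa using ⟨hw0, hb0⟩⟩
  rw [Finset.mem_filter] at hw1
  obtain ⟨hw1, w', hw', hlt, u, hu, huw⟩ := hw1
  obtain ⟨p, v, q, e, ⟨w'', hw'', hlt'', hv''⟩, hp⟩ := first_split
    (fun u => ∃ w' ∈ S, κ w1.head? < κ w'.head? ∧ u ∈ w') (LE' w1) ⟨u, hu, w', hw', hlt, huw⟩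
  obtain ⟨w2, hw2, hmin2⟩ := Finset.exists_min_image
    (S.filter (fun w' => κ w1.head? < κ w'.head? ∧ v ∈ w'))
    (fun w => κ w.head?) ⟨w'', by simpa using ⟨hw'', hlt'', hv''⟩⟩
  rw [Finset.mem_filter] at hw2
  obtain ⟨hw2, hlt2, hv2⟩ := hw2
  obtain ⟨a, b, e1, hb, -, -⟩ := LE_cut _ w1 le_rfl p v q e
  obtain ⟨c, e2⟩ := afterL_spec hv2
  have hd := not_mem_afterL v w2
  generalize afterL v w2 = d at e2 hd
  subst e1 e2
  refine ⟨v, a, b, c, d, hw1, hw2, hlt2, hb, hd, ?_, ⟨p, q, e, ?_⟩, ?_⟩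
  · intro w hw hlw w' hw' hlw' u hu huw'
    have := hmin w (by rw [Finset.mem_filter]; exact ⟨hw, w', hw', hlw', u, hu, huw'⟩)
    omega
  · intro u hu w' hw' hl huw
    exact hp u hu ⟨w', hw', hl, huw⟩
  · intro w' hw' hl hl' hv
    have := hmin2 w' (by rw [Finset.mem_filter]; exact ⟨hw', hl, hv⟩)
    omega

/-- Swapping tails. -/
def swapS (S : Finset (List V)) (v : V) (a b c d : List V) : Finset (List V) :=
  insert (a ++ v :: d) (insert (c ++ v :: b) ((S.erase (a ++ v :: b)).erase (c ++ v :: d)))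

theorem head_eq (a b d : List V) (v : V) : (a ++ v :: b).head? = (a ++ v :: d).head? := by
  cases a <;> simp

theorem last_eq (a b c : List V) (v : V) : (a ++ v :: b).getLast? = (c ++ v :: b).getLast? := by
  simp [List.getLast?_cons]

section
variable {κ : Option V → ℕ} {S : Finset (List V)} {v : V} {a b c d : List V}

theorem mem_swapS {w : List V} : w ∈ swapS S v a b c d ↔ w = a ++ v :: d ∨ w = c ++ v :: b ∨
    (w ∈ S ∧ w ≠ a ++ v :: b ∧ w ≠ c ++ v :: d) := by
  simp only [swapS, Finset.mem_insert, Finset.mem_erase]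
  tauto

theorem Spec.swap (s : Spec κ S v a b c d) : Spec κ (swapS S v a b c d) v a d c b := by
  obtain ⟨p, q, e, hp⟩ := s.h2
  obtain ⟨a', b', e1, hb', hpb, hcut⟩ := LE_cut _ _ le_rfl p v q e
  obtain ⟨rfl, rfl⟩ := last_split_unique e1 s.nb hb'
  have hpw2 : ∀ u ∈ p, u ∉ c ++ v :: d := fun u hu => hp u hu _ s.m2 s.lt
  have hpd : ∀ u ∈ p, u ∉ d := fun u hu h => hpw2 u hu (by simp [h])
  have H1 := head_eq a d b v
  have H2 := head_eq c b d v
  have hlt := s.lt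
  refine ⟨?_, ?_, ?_, s.nd, s.nb, ?_, ⟨p, LE' d, hcut d s.nd hpd, ?_⟩, ?_⟩
  · rw [mem_swapS]; exact Or.inl rfl
  · rw [mem_swapS]; exact Or.inr (Or.inl rfl)
  · rw [H1, H2]; exact s.lt
  · rw [H1]
    intro w hw hlw w' hw' hlw' u hu
    have hwS : w ∈ S := by
      rcases mem_swapS.1 hw with rfl | rfl | ⟨h, -⟩
      · rw [H1] at hlw; omega
      · rw [H2] at hlw; omega
      · exact h
    have h1 := s.h1 w hwS hlw _ s.m1 hlw u hu
    have h2 := s.h1 w hwS hlw _ s.m2 (by omega) u hu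
    rcases mem_swapS.1 hw' with rfl | rfl | ⟨h, -⟩
    · simp at h1 h2 ⊢; tauto
    · simp at h1 h2 ⊢; tauto
    · exact s.h1 w hwS hlw w' h hlw' u hu
  · rw [H1]
    intro u hu w' hw' hlw'
    rcases mem_swapS.1 hw' with rfl | rfl | ⟨h, -⟩
    · rw [H1] at hlw'; omega
    · have h2 := hpw2 u hu
      have h3 := hpb u hu
      simp at h2 ⊢; tauto
    · exact hp u hu w' h hlw'
  · rw [H1, H2]
    intro w' hw' hlw' hlw''
    rcases mem_swapS.1 hw' with rfl | rfl | ⟨h, -⟩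
    · rw [H1] at hlw'; omega
    · rw [H2] at hlw''; omega
    · exact s.h4 w' h hlw' hlw''

theorem Spec.notMem (s : Spec κ S v a b c d)
    (hS : ∀ w ∈ S, ∀ w' ∈ S, κ w.head? = κ w'.head? → w = w') :
    a ++ v :: d ∉ insert (c ++ v :: b) ((S.erase (a ++ v :: b)).erase (c ++ v :: d)) ∧
    c ++ v :: b ∉ (S.erase (a ++ v :: b)).erase (c ++ v :: d) ∧
    a ++ v :: b ∉ insert (c ++ v :: d) ((S.erase (a ++ v :: b)).erase (c ++ v :: d)) ∧
    S = insert (a ++ v :: b) (insert (c ++ v :: d)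
      ((S.erase (a ++ v :: b)).erase (c ++ v :: d))) := by
  have H1 := head_eq a d b v
  have H2 := head_eq c b d v
  have hlt := s.lt
  have hne : a ++ v :: b ≠ c ++ v :: d := by
    intro h; rw [h] at hlt; omega
  refine ⟨?_, ?_, ?_, ?_⟩
  · intro h
    rw [Finset.mem_insert, Finset.mem_erase, Finset.mem_erase] at h
    rcases h with h | ⟨-, h, h'⟩
    · rw [← H1, h, H2] at hlt; omega
    · exact h (hS _ h' _ s.m1 (by rw [H1]))
  · intro h
    rw [Finset.mem_erase, Finset.mem_erase] at h
    exact h.1 (hS _ h.2.2 _ s.m2 (by rw [H2]))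
  · intro h
    rw [Finset.mem_insert, Finset.mem_erase, Finset.mem_erase] at h
    rcases h with h | h
    · exact hne h
    · exact h.2.1 rfl
  · rw [Finset.insert_erase, Finset.insert_erase s.m1]
    exact Finset.mem_erase.2 ⟨hne.symm, s.m2⟩

theorem Spec.swap_swap (s : Spec κ S v a b c d)
    (hS : ∀ w ∈ S, ∀ w' ∈ S, κ w.head? = κ w'.head? → w = w') :
    swapS (swapS S v a b c d) v a d c b = S := by
  obtain ⟨h1, h2, -, h3⟩ := s.notMem hS
  rw [swapS]
  conv_lhs => rw [swapS, Finset.erase_insert h1, Finset.erase_insert h2]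
  exact h3.symm

theorem Spec.prod {M : Type*} [CommMonoid M] (f : List V → M) (s : Spec κ S v a b c d)
    (hS : ∀ w ∈ S, ∀ w' ∈ S, κ w.head? = κ w'.head? → w = w')
    (hf : f (a ++ v :: b) * f (c ++ v :: d) = f (a ++ v :: d) * f (c ++ v :: b)) :
    ∏ w ∈ swapS S v a b c d, f w = ∏ w ∈ S, f w := by
  obtain ⟨h1, h2, h3, h4⟩ := s.notMem hS
  conv_rhs => rw [h4]
  rw [swapS, Finset.prod_insert h1, Finset.prod_insert h2, Finset.prod_insert h3,
    Finset.prod_insert (by simp), ← mul_assoc, ← mul_assoc, hf]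

theorem walkMonomial_split (F : Type*) [Field F] (a b : List V) (v : V) :
    walkMonomial F (a ++ v :: b) = walkMonomial F (a ++ [v]) * walkMonomial F (v :: b) := by
  simp only [walkMonomial]
  rw [edgesOf_split, List.map_append, List.prod_append]

theorem ProperSet.inj {E : V → V → Prop} {X Y : Set V} {k : ℕ} (hκ : Function.Injective κ)
    (h : ProperSet E X Y k S) : ∀ w ∈ S, ∀ w' ∈ S, κ w.head? = κ w'.head? → w = w' := by
  intro w hw w' hw' e
  by_contra hne
  exact (h.2.2 w hw w' hw' hne).1 (hκ e)

theorem Spec.sum (s : Spec κ S v a b c d)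
    (hS : ∀ w ∈ S, ∀ w' ∈ S, κ w.head? = κ w'.head? → w = w') (f : List V → ℕ)
    (hf : f (a ++ v :: b) + f (c ++ v :: d) = f (a ++ v :: d) + f (c ++ v :: b)) :
    ∑ w ∈ swapS S v a b c d, f w = ∑ w ∈ S, f w := by
  obtain ⟨h1, h2, h3, h4⟩ := s.notMem hS
  conv_rhs => rw [h4]
  rw [swapS, Finset.sum_insert h1, Finset.sum_insert h2, Finset.sum_insert h3,
    Finset.sum_insert (by simp), ← add_assoc, ← add_assoc, hf]

theorem Spec.proper {E : V → V → Prop} {X Y : Set V} (hXY : Disjoint X Y) {k : ℕ}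
    (hκ : Function.Injective κ) (h : ProperSet E X Y k S) (s : Spec κ S v a b c d) :
    ProperSet E X Y k (swapS S v a b c d) ∧ swapS S v a b c d ≠ S := by
  have hS := h.inj hκ
  have hlt := s.lt
  have hne : a ++ v :: b ≠ c ++ v :: d := by
    intro h; rw [h] at hlt; omega
  obtain ⟨hk, hw, hd⟩ := h
  have W1 := hw _ s.m1
  have W2 := hw _ s.m2
  obtain ⟨hh, hl⟩ := hd _ s.m1 _ s.m2 hne
  have hvX : v ∉ X := fun hv => hh (by
    rw [walk_mem_X hXY W1 (by simp) hv, walk_mem_X hXY W2 (by simp) hv])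
  have hvY : v ∉ Y := fun hv => hl (by
    rw [walk_mem_Y hXY W1 (by simp) hv, walk_mem_Y hXY W2 (by simp) hv])
  have W1' : IsWalk E X Y (a ++ v :: d) := (walk_split hvX hvY).2
    ⟨((walk_split hvX hvY).1 W1).1, ((walk_split hvX hvY).1 W2).2⟩
  have W2' : IsWalk E X Y (c ++ v :: b) := (walk_split hvX hvY).2
    ⟨((walk_split hvX hvY).1 W2).1, ((walk_split hvX hvY).1 W1).2⟩
  have H1 := head_eq a d b v
  have H2 := head_eq c b d v
  have L1 := last_eq a d c v
  have L2 := last_eq c b a v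
  refine ⟨⟨?_, ?_, ?_⟩, ?_⟩
  · rw [← hk, Finset.card_eq_sum_ones, Finset.card_eq_sum_ones]
    exact s.sum hS (fun _ => 1) rfl
  · intro w hwm
    rcases mem_swapS.1 hwm with rfl | rfl | ⟨h, -⟩
    · exact W1'
    · exact W2'
    · exact hw w h
  · intro w hwm w' hwm' hww
    rcases mem_swapS.1 hwm with rfl | rfl | ⟨h, hn1, hn2⟩ <;>
    rcases mem_swapS.1 hwm' with rfl | rfl | ⟨h', hn1', hn2'⟩
    · exact absurd rfl hww
    · rw [H1, H2, L1, L2]; exact ⟨hh, hl.symm⟩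
    · rw [H1, L1]
      exact ⟨(hd _ s.m1 _ h' hn1'.symm).1, (hd _ s.m2 _ h' hn2'.symm).2⟩
    · rw [H1, H2, L1, L2]; exact ⟨hh.symm, hl⟩
    · exact absurd rfl hww
    · rw [H2, L2]
      exact ⟨(hd _ s.m2 _ h' hn2'.symm).1, (hd _ s.m1 _ h' hn1'.symm).2⟩
    · rw [H1, L1]
      exact ⟨(hd _ h _ s.m1 hn1).1, (hd _ h _ s.m2 hn2).2⟩
    · rw [H2, L2]
      exact ⟨(hd _ h _ s.m2 hn2).1, (hd _ h _ s.m1 hn1).2⟩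
    · exact hd _ h _ h' hww
  · intro e
    have hm : a ++ v :: d ∈ S := by rw [← e, mem_swapS]; exact Or.inl rfl
    have := hS _ hm _ s.m1 (by rw [H1])
    rw [this] at L1
    exact hl L1

end

/-- Loop-erasing a good family. -/
theorem erase_family {E : V → V → Prop} {X Y : Set V} (hXY : Disjoint X Y) {k : ℕ}
    {κ : Option V → ℕ} (hκ : Function.Injective κ) {S : Finset (List V)}
    (h : ProperSet E X Y k S)
    (hgood : ∀ w ∈ S, ∀ w' ∈ S, κ w.head? < κ w'.head? → ∀ u ∈ LE' w, u ∉ w') :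
    ∃ T : Finset (List V), ProperSet E X Y k T ∧
      (∑ w ∈ T, (w.length - 1)) ≤ (∑ w ∈ S, (w.length - 1)) ∧ (∀ w ∈ T, w.Nodup) ∧
      ∀ w ∈ T, ∀ w' ∈ T, w ≠ w' → ∀ v, v ∈ w → v ∉ w' := by
  have hS := h.inj hκ
  have hinj : Set.InjOn LE' (S : Set (List V)) := by
    intro w hw w' hw' e
    exact hS w hw w' hw' (by rw [← LE_head w, ← LE_head w', e])
  refine ⟨S.image LE', ⟨?_, ?_, ?_⟩, ?_, ?_, ?_⟩
  · rw [Finset.card_image_of_injOn hinj, h.1]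
  · intro w hw
    obtain ⟨w, hwS, rfl⟩ := Finset.mem_image.1 hw
    replace hw := hwS
    exact LE_walk hXY (h.2.1 w hw)
  · intro w hw w' hw' hne
    obtain ⟨w, hwS, rfl⟩ := Finset.mem_image.1 hw
    replace hw := hwS
    obtain ⟨w', hwS', rfl⟩ := Finset.mem_image.1 hw'
    replace hw' := hwS'
    rw [LE_head, LE_head, (LE_props E _ w le_rfl).2.1, (LE_props E _ w' le_rfl).2.1]
    exact h.2.2 w hw w' hw' (fun e => hne (by rw [e]))
  · rw [Finset.sum_image hinj]
    refine Finset.sum_le_sum fun w _ => ?_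
    have := (LE_sub w).length_le
    omega
  · intro w hw
    obtain ⟨w, hwS, rfl⟩ := Finset.mem_image.1 hw
    replace hw := hwS
    exact (LE_props E _ w le_rfl).1
  · intro w hw w' hw' hne u hu hu'
    obtain ⟨w, hwS, rfl⟩ := Finset.mem_image.1 hw
    replace hw := hwS
    obtain ⟨w', hwS', rfl⟩ := Finset.mem_image.1 hw'
    replace hw' := hwS'
    rcases lt_trichotomy (κ w.head?) (κ w'.head?) with h | h | h
    · exact hgood w hw w' hw' h u hu ((LE_sub _).subset hu')
    · exact hne (by rw [hS w hw w' hw' h])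
    · exact hgood w' hw' w hw h u hu' ((LE_sub _).subset hu)

/-- The exponent of the monomial of a set of walks. -/
def expo (S : Finset (List V)) : (V × V) →₀ ℕ :=
  ∑ w ∈ S, Multiset.toFinsupp (edgesOf w : Multiset (V × V))

theorem walkMonomial_eq (F : Type*) [Field F] (w : List V) :
    walkMonomial F w =
      MvPolynomial.monomial (Multiset.toFinsupp (edgesOf w : Multiset (V × V))) (1 : F) := by
  unfold walkMonomial
  generalize edgesOf w = l
  induction l with
  | nil => simp
  | cons e l ih =>
    rw [List.map_cons, List.prod_cons, ih, ← Multiset.cons_coe, ← Multiset.singleton_add,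
      map_add, Multiset.toFinsupp_singleton, MvPolynomial.X, MvPolynomial.monomial_mul, mul_one]

theorem prod_walkMonomial (F : Type*) [Field F] (S : Finset (List V)) :
    ∏ w ∈ S, walkMonomial F w = MvPolynomial.monomial (expo S) (1 : F) := by
  unfold expo
  rw [MvPolynomial.monomial_sum_one]
  exact Finset.prod_congr rfl fun w _ => walkMonomial_eq F w

theorem expo_edge {S T : Finset (List V)} (h : expo S = expo T) {w : List V} (hw : w ∈ S)
    {e : V × V} (he : e ∈ edgesOf w) : ∃ w' ∈ T, e ∈ edgesOf w' := by
  by_contra hno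
  push Not at hno
  have h1 : expo T e = 0 := by
    simp only [expo, Finsupp.finsetSum_apply]
    refine Finset.sum_eq_zero fun w' hw' => ?_
    simpa [List.count_eq_zero] using hno w' hw'
  rw [← h] at h1
  simp only [expo, Finsupp.finsetSum_apply] at h1
  have := Finset.sum_eq_zero_iff.1 h1 w hw
  simp [List.count_eq_zero] at this
  exact this he

theorem nodup_split {a a' b b' : List V} {x : V} (h : a ++ x :: b = a' ++ x :: b')
    (hn : (a ++ x :: b).Nodup) : b = b' := by
  have hn' := hn
  rw [h] at hn'
  simp [List.nodup_append] at hn hn'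
  exact (last_split_unique h hn.2.1.1 hn'.2.1.1).2

theorem follow {E : V → V → Prop} {X Y : Set V} {T : Finset (List V)}
    (hXY : Disjoint X Y)
    (hwalk : ∀ w ∈ T, IsWalk E X Y w) (hnd : ∀ w ∈ T, w.Nodup)
    (hdis : ∀ w ∈ T, ∀ w' ∈ T, w ≠ w' → ∀ v, v ∈ w → v ∉ w')
    {w0 : List V} (hw0 : w0 ∈ T) (w : List V) : ∀ (x : V) (pre s : List V),
    w0 = pre ++ x :: s → (∀ e ∈ edgesOf (x :: w), ∃ w' ∈ T, e ∈ edgesOf w') →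
    (∀ b, (x :: w).getLast? = some b → b ∈ Y) → w = s := by
  induction w with
  | nil =>
    intro x pre s e _ hl
    have hx := hl x (by simp)
    have h1 := walk_mem_Y hXY (hwalk _ hw0) (v := x) (by simp [e]) hx
    rcases List.eq_nil_or_concat s with rfl | ⟨s, y, rfl⟩
    · rfl
    · have hn := hnd _ hw0
      rw [e] at h1 hn
      simp [List.getLast?_cons] at h1
      subst h1
      simp [List.nodup_append] at hn
  | cons u w ih =>
    intro x pre s e he hl
    obtain ⟨w1, hw1, he1⟩ := he (x, u) (by simp [edgesOf])
    obtain ⟨a, b, e1⟩ := mem_edgesOf he1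
    have : w0 = w1 := by
      by_contra hne
      exact hdis _ hw0 _ hw1 hne x (by simp [e]) (by simp [e1])
    subst this
    have hn := hnd _ hw0
    have hs : s = u :: b := nodup_split (e.symm.trans e1) (e ▸ hn)
    subst hs
    have := ih u (pre ++ [x]) b (by simp [e]) ?_ ?_
    · rw [this]
    · intro e' he'
      refine he e' ?_
      have : edgesOf (x :: u :: w) = (x, u) :: edgesOf (u :: w) := by simp [edgesOf]
      rw [this]; exact List.mem_cons_of_mem _ he'
    · intro b hb
      exact hl b (by simpa [List.getLast?_cons] using hb)

theorem unique_of_expo {E : V → V → Prop} {X Y : Set V} {k : ℕ} {S T : Finset (List V)}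
    (hXY : Disjoint X Y) (hS : ProperSet E X Y k S) (hT : ProperSet E X Y k T)
    (hnd : ∀ w ∈ T, w.Nodup)
    (hdis : ∀ w ∈ T, ∀ w' ∈ T, w ≠ w' → ∀ v, v ∈ w → v ∉ w')
    (h : expo S = expo T) : S = T := by
  refine Finset.eq_of_subset_of_card_le ?_ (by rw [hS.1, hT.1])
  intro w hw
  obtain ⟨x, m, y, e, hx, hy, hm, hc⟩ := isWalk_iff.1 (hS.2.1 w hw)
  obtain ⟨u, t, et⟩ : ∃ u t, m ++ [y] = u :: t := by
    cases m with
    | nil => exact ⟨y, [], rfl⟩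
    | cons u m => exact ⟨u, m ++ [y], rfl⟩
  obtain ⟨w0, hw0, he0⟩ := expo_edge h hw (e := (x, u)) (by rw [e, et]; simp [edgesOf])
  obtain ⟨a, b, e0⟩ := mem_edgesOf he0
  have hh := walk_mem_X hXY (hT.2.1 w0 hw0) (v := x) (by simp [e0]) hx
  obtain ⟨s, es⟩ : ∃ s, w0 = x :: s := by
    cases w0 with
    | nil => simp at hh
    | cons z s => simp at hh; exact ⟨s, by rw [hh]⟩
  have := follow hXY hT.2.1 hnd hdis hw0 (m ++ [y]) x [] s es
    (fun e' he' => expo_edge h hw (by rw [e]; exact he'))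
    (fun b hb => by simp [List.getLast?_cons] at hb; exact hb ▸ hy)
  rw [e, this, ← es]; exact hw0

/-- Over a field of characteristic two, the polynomial
`Q = ∑_{S} ∏_{W ∈ S} M_W`, the sum ranging over all proper sets `S` of `k`
walks of total length at most `l`, is nonzero iff there is a proper set of `k`
pairwise vertex-disjoint walks of total length at most `l`. -/
theorem walk_polynomial_ne_zero_iff (E : V → V → Prop) (X Y : Set V)
    (hXY : Disjoint X Y) (n : ℕ) [Fintype V] (hn : Fintype.card V = n)
    (k l : ℕ) (hl : l ≤ k * (n - 1))
    (F : Type*) [Field F] [CharP F 2]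
    (fam : Set (Finset (List V)))
    (hfam : fam = {S | ProperSet E X Y k S ∧ (∑ w ∈ S, (w.length - 1)) ≤ l})
    (hfin : fam.Finite) :
    (∑ S ∈ hfin.toFinset, ∏ w ∈ S, walkMonomial F w) ≠ 0 ↔
      ∃ S : Finset (List V), ProperSet E X Y k S ∧
        (∑ w ∈ S, (w.length - 1)) ≤ l ∧
        ∀ w ∈ S, ∀ w' ∈ S, w ≠ w' → ∀ v, v ∈ w → v ∉ w' := by
  obtain ⟨κ, hκ⟩ := exists_injective_nat (Option V)
  constructor
  · intro hQ
    by_contra hno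
    apply hQ
    have hmem : ∀ S, S ∈ hfin.toFinset ↔
        ProperSet E X Y k S ∧ (∑ w ∈ S, (w.length - 1)) ≤ l := by
      intro S; rw [Set.Finite.mem_toFinset, hfam]; rfl
    have hspec : ∀ S ∈ hfin.toFinset, ∃ t : V × List V × List V × List V × List V,
        Spec κ S t.1 t.2.1 t.2.2.1 t.2.2.2.1 t.2.2.2.2 := by
      intro S hS
      rw [hmem] at hS
      obtain ⟨v, a, b, c, d, s⟩ : ∃ v a b c d, Spec κ S v a b c d := by
        apply Spec.exists
        by_contra hg
        push Not at hg
        obtain ⟨T, hT, hTl, -, hTd⟩ := erase_family hXY hκ hS.1 hg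
        exact hno ⟨T, hT, hTl.trans hS.2, hTd⟩
      exact ⟨(v, a, b, c, d), s⟩
    rcases Finset.eq_empty_or_nonempty hfin.toFinset with hemp | ⟨S0, hS0⟩
    · rw [hemp, Finset.sum_empty]
    have hne : Nonempty (V × List V × List V × List V × List V) :=
      ⟨(hspec S0 hS0).choose⟩
    choose! t ht using hspec
    let φ : Finset (List V) → Finset (List V) := fun S =>
      swapS S (t S).1 (t S).2.1 (t S).2.2.1 (t S).2.2.2.1 (t S).2.2.2.2
    have hφ : ∀ S ∈ hfin.toFinset, φ S ∈ hfin.toFinset := by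
      intro S hS
      have s := ht S hS
      rw [hmem] at hS ⊢
      refine ⟨(s.proper hXY hκ hS.1).1, ?_⟩
      refine le_trans (le_of_eq (s.sum (hS.1.inj hκ) _ ?_)) hS.2
      simp only [List.length_append, List.length_cons]
      omega
    refine Finset.sum_involution (fun S _ => φ S) ?_ ?_ (fun S hS => hφ S hS) ?_
    · intro S hS
      have s := ht S hS
      have hP := ((hmem S).1 hS).1
      have : ∏ w ∈ φ S, walkMonomial F w = ∏ w ∈ S, walkMonomial F w := by
        refine s.prod _ (hP.inj hκ) ?_
        rw [walkMonomial_split, walkMonomial_split F (t S).2.2.2.1,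
          walkMonomial_split F (t S).2.1 (t S).2.2.2.2,
          walkMonomial_split F (t S).2.2.2.1 (t S).2.2.1]
        ring
      rw [this]
      exact CharTwo.add_self_eq_zero _
    · intro S hS _
      exact ((ht S hS).proper hXY hκ ((hmem S).1 hS).1).2
    · intro S hS
      have s := ht S hS
      have hP := ((hmem S).1 hS).1
      have s1 := s.swap
      have s2 := ht _ (hφ S hS)
      have hP' := ((hmem _).1 (hφ S hS)).1
      obtain ⟨e1, e2, e3, e4, e5⟩ := s2.unique (hP'.inj hκ) s1
      show swapS (φ S) (t (φ S)).1 _ _ _ _ = S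
      rw [e1, e2, e3, e4, e5]
      exact s.swap_swap (hP.inj hκ)
  · rintro ⟨S, hS, hSl, hdis⟩
    obtain ⟨T, hT, hTl, hnd, hTd⟩ := erase_family hXY hκ hS (by
      intro w hw w' hw' hlt u hu
      exact hdis w hw w' hw' (fun e => by rw [e] at hlt; omega) u ((LE_sub w).subset hu))
    intro h0
    have hc := congrArg (MvPolynomial.coeff (expo T)) h0
    rw [MvPolynomial.coeff_sum, Finset.sum_eq_single T] at hc
    · rw [prod_walkMonomial] at hc
      simp at hc
    · intro S' hS' hne
      rw [prod_walkMonomial, MvPolynomial.coeff_monomial, if_neg]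
      intro he
      rw [Set.Finite.mem_toFinset, hfam] at hS'
      exact hne (unique_of_expo hXY hS'.1 hT hnd hTd he)
    · intro hn
      rw [Set.Finite.mem_toFinset, hfam] at hn
      exact absurd ⟨hT, hTl.trans hSl⟩ hn

end
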